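/- arXiv:1407.3041 — 2 statements merged into one kernel-verified Lean document; each statement's English description precedes it below -/
import Mathlib

section
/- There exists a constant c such that every strongly connected digraph G = (V, E) with n vertices contains a spanning subgraph C = (V, E') with E' ⊆ E and |E'| ≤ c·n such that C is strongly connected and C has the same 2-edge-connected blocks as G; that is, for all vertices v, w: v ↔₂ₑ w in C if and only if v ↔₂ₑ w in G. -/
variable {V : Type*}

/-- `p` is a path from `u` to `w` in the digraph with edge set `E`:
a nonempty list of vertices starting at `u`, ending at `w`, with consecutive edges in `E`. -/
def IsPathFrom (E : Set (V × V)) (u w : V) (p : List V) : Prop :=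
  p.head? = some u ∧ p.getLast? = some w ∧ p.Chain' (fun a b => (a, b) ∈ E)

/-- There is a path from `u` to `w` in the digraph with edge set `E`. -/
def Reaches (E : Set (V × V)) (u w : V) : Prop :=
  ∃ p, IsPathFrom E u w p

/-- Every vertex has a path to every other vertex. -/
def StronglyConnected (E : Set (V × V)) : Prop :=
  ∀ u w : V, Reaches E u w

/-- `v` and `w` are 2-edge-connected: `v = w` or, for every edge `e`,
there are paths from `v` to `w` and from `w` to `v` avoiding `e`. -/
def TwoEdgeConn (E : Set (V × V)) (v w : V) : Prop :=
  v = w ∨ ∀ e ∈ E, Reaches (E \ {e}) v w ∧ Reaches (E \ {e}) w v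

/-- `w` is 2-edge-connected from `v`: for every edge `e` there is a path
from `v` to `w` avoiding `e`. -/
def TwoEdgeConnFrom (E : Set (V × V)) (v w : V) : Prop :=
  ∀ e ∈ E, Reaches (E \ {e}) v w

/-- `u` dominates `w` in the flow graph with start vertex `s`:
every path from `s` to `w` contains `u`. -/
def Dominates (E : Set (V × V)) (s u w : V) : Prop :=
  ∀ p, IsPathFrom E s w p → u ∈ p

/-- `(u, w)` is a bridge of the flow graph with start vertex `s`:
every path from `s` to `w` contains the edge `(u, w)`. -/
def IsBridge (E : Set (V × V)) (s u w : V) : Prop :=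
  (u, w) ∈ E ∧ ∀ p, IsPathFrom E s w p → (u, w) ∈ p.zip p.tail

/-- `w` is marked in the flow graph with start vertex `s`: some bridge ends at `w`. -/
def Marked (E : Set (V × V)) (s w : V) : Prop :=
  ∃ u, IsBridge E s u w

/-- The reverse digraph: every edge direction is reversed. -/
def reverseE (E : Set (V × V)) : Set (V × V) :=
  {e | (e.2, e.1) ∈ E}

/-- `u` and `w` are mutually reachable. -/
def MutualReach (E : Set (V × V)) (u w : V) : Prop :=
  Reaches E u w ∧ Reaches E w u

/-- The number of strongly connected components: the number of equivalence
classes of the mutual-reachability relation. -/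
noncomputable def numSCC (E : Set (V × V)) : ℕ :=
  Nat.card (Quot (MutualReach E))

/-- `e` is a strong bridge: removing it increases the number of strongly
connected components. -/
def IsStrongBridge (E : Set (V × V)) (e : V × V) : Prop :=
  e ∈ E ∧ numSCC E < numSCC (E \ {e})

/-- `d` is the immediate dominator of `w` in the flow graph with start vertex `s`:
`d` is a proper dominator of `w` dominated by every proper dominator of `w`. -/
def ImmDomIs (E : Set (V × V)) (s w d : V) : Prop :=
  Dominates E s d w ∧ d ≠ w ∧ ∀ x, Dominates E s x w → x ≠ w → Dominates E s x d

/-- `r` is the deepest marked dominator `r_v` of `v`: either `r` is a marked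
dominator of `v` dominated by every marked dominator of `v`, or no marked vertex
dominates `v` and `r = s`. -/
def DeepestMarkedDomIs (E : Set (V × V)) (s v r : V) : Prop :=
  (Marked E s r ∧ Dominates E s r v ∧
    ∀ x, Marked E s x → Dominates E s x v → Dominates E s x r)
  ∨ (r = s ∧ ∀ x, Marked E s x → ¬ Dominates E s x v)

/-- `T(r)`: the vertices whose deepest marked dominator is `r`. -/
def Tset (E : Set (V × V)) (s r : V) : Set V :=
  {v | DeepestMarkedDomIs E s v r}

/-- The roots of the decomposition of the dominator tree: `s` and the marked vertices. -/
def IsRoot (E : Set (V × V)) (s r : V) : Prop :=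
  r = s ∨ Marked E s r

/-- `z` is a marked child (in the dominator tree) of a boundary vertex of `T(r)`. -/
def MarkedChildOfBoundary (E : Set (V × V)) (s r z : V) : Prop :=
  Marked E s z ∧ ∃ x ∈ Tset E s r, ImmDomIs E s z x

/-- The vertex set `V_r` of the auxiliary graph `G_r` (with `dr` playing the role
of `d(r)` when `r ≠ s`): the ordinary vertices `T(r)`, the marked children of
boundary vertices of `T(r)`, and (if `r ≠ s`) the vertex `d(r)`. -/
def auxVerts (E : Set (V × V)) (s r dr : V) : Set V :=
  Tset E s r ∪ {z | MarkedChildOfBoundary E s r z} ∪ {x | r ≠ s ∧ x = dr}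

/-- The edge set `E_r` of the auxiliary graph `G_r` (with `dr` playing the role of
`d(r)` when `r ≠ s`): edges of `G` between ordinary vertices; the edge `(v, w)` for
each boundary vertex `v ∈ T(r)` and marked child `w` of `v`; the edge `(d(r), r)` if
`r ≠ s`; and the shortcut edges of types (a), (b), (c). -/
def auxEdges (E : Set (V × V)) (s r dr : V) : Set (V × V) :=
  {e | e ∈ E ∧ e.1 ∈ Tset E s r ∧ e.2 ∈ Tset E s r} ∪
  {e | e.1 ∈ Tset E s r ∧ Marked E s e.2 ∧ ImmDomIs E s e.2 e.1} ∪
  {e | r ≠ s ∧ e = (dr, r)} ∪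
  {e | ∃ u v, (u, v) ∈ E ∧ u ∈ Tset E s r ∧ ¬ Dominates E s r v ∧ e = (u, dr)} ∪
  {e | ∃ u v z, (u, v) ∈ E ∧ v ∈ Tset E s r ∧ Dominates E s r u ∧ u ∉ Tset E s r ∧
      MarkedChildOfBoundary E s r z ∧ Dominates E s z u ∧ e = (z, v)} ∪
  {e | ∃ u v z, (u, v) ∈ E ∧ Dominates E s r u ∧ u ∉ Tset E s r ∧ ¬ Dominates E s r v ∧
      MarkedChildOfBoundary E s r z ∧ Dominates E s z u ∧ e = (z, dr)}

namespace SparseCert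
open Classical

noncomputable def dd {V ε : Type} (s t : ε → V) (F : Finset ε) (S : Set V) : ℕ :=
  (F.filter (fun e => s e ∈ S ∧ t e ∉ S)).card

theorem dd_compl {V ε : Type} (s t : ε → V) (F : Finset ε) (S : Set V) :
    dd s t F Sᶜ = dd t s F S := by
  unfold dd
  congr 1
  ext e
  simp only [Finset.mem_filter, Set.mem_compl_iff, not_not]
  tauto

theorem dd_mono {V ε : Type} (s t : ε → V) {F F' : Finset ε} (h : F ⊆ F') (S : Set V) :
    dd s t F S ≤ dd s t F' S :=
  Finset.card_le_card (Finset.filter_subset_filter _ h)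

theorem dd_submod {V ε : Type} (s t : ε → V) (F : Finset ε) (S T : Set V) :
    dd s t F (S ∩ T) + dd s t F (S ∪ T) ≤ dd s t F S + dd s t F T := by
  unfold dd
  simp only [Finset.card_filter, ← Finset.sum_add_distrib]
  apply Finset.sum_le_sum
  intro e _
  by_cases h1 : s e ∈ S <;> by_cases h2 : s e ∈ T <;> by_cases h3 : t e ∈ S <;>
    by_cases h4 : t e ∈ T <;> simp [h1, h2, h3, h4]

theorem dd_congr {V ε : Type} (s t : ε → V) (F : Finset ε) (S T : Set V)
    (hs : ∀ e, s e ∈ S ↔ s e ∈ T) (ht : ∀ e, t e ∈ S ↔ t e ∈ T) :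
    dd s t F S = dd s t F T := by
  unfold dd
  simp only [hs, ht]

/-- minimal subgraph lemma; `P` a family of sets, in-cuts -/
theorem minimal_lemma {V ε : Type} (s t : ε → V) (N : Finset V) (F : Finset ε)
    (ht : ∀ e, t e ∈ N) (k : ℕ) (hk : k ≤ 2) (D : Set V) (P : Set V → Prop)
    (hD : ∀ v ∈ D, (F.filter (fun e => t e = v)).card ≤ 2)
    (hP : ∀ X, P X → k ≤ dd t s F X)
    (hcl : ∀ v ∈ N, v ∉ D → ∀ X Y, v ∈ X → v ∈ Y → P X → P Y → P (X ∩ Y) ∧ P (X ∪ Y)) :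
    ∃ F' ⊆ F, F'.card ≤ 2 * N.card ∧ (∀ X, P X → k ≤ dd t s F' X) ∧
      ∀ e ∈ F, t e ∈ D → e ∈ F' := by
  let Q : Finset (Finset ε) := F.powerset.filter
    (fun F' => (∀ X, P X → k ≤ dd t s F' X) ∧ ∀ e ∈ F, t e ∈ D → e ∈ F')
  have hQ : Q.Nonempty := ⟨F, by simp only [Q, Finset.mem_filter, Finset.mem_powerset]; exact ⟨subset_rfl, hP, fun e h _ => h⟩⟩
  obtain ⟨F', hF', hmin⟩ := Finset.exists_min_image Q Finset.card hQ
  simp only [Q, Finset.mem_filter, Finset.mem_powerset] at hF' hmin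
  obtain ⟨hsub, hreq, hkeep⟩ := hF'
  refine ⟨F', hsub, ?_, hreq, hkeep⟩
  apply Finset.card_le_mul_card_image_of_maps_to (f := t) (fun e _ => ht e)
  intro v hvN
  by_cases hv : v ∈ D
  · exact (Finset.card_le_card (Finset.filter_subset_filter _ hsub)).trans (hD v hv)
  have crit : ∀ e ∈ F', t e = v → ∃ X, P X ∧ v ∈ X ∧ s e ∉ X ∧ dd t s F' X ≤ k := by
    intro e he hev
    by_contra hcon
    push Not at hcon
    have := hmin (F'.erase e) ⟨(Finset.erase_subset _ _).trans hsub, ?_, ?_⟩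
    · have := Finset.card_erase_lt_of_mem he
      omega
    · intro X hX
      by_cases hx : v ∈ X ∧ s e ∉ X
      · have h1 := hcon X hX hx.1 hx.2
        have h2 : dd t s F' X ≤ dd t s (F'.erase e) X + 1 := by
          unfold dd
          rw [Finset.filter_erase]
          have := Finset.pred_card_le_card_erase (s := F'.filter (fun e => t e ∈ X ∧ s e ∉ X)) (a := e)
          omega
        omega
      · have h1 := hreq X hX
        have : dd t s (F'.erase e) X = dd t s F' X := by
          unfold dd
          rw [Finset.filter_erase, Finset.erase_eq_of_notMem]
          simp only [Finset.mem_filter, hev]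
          tauto
        omega
    · intro e' he' hd
      refine Finset.mem_erase.2 ⟨?_, hkeep e' he' hd⟩
      rintro rfl
      exact hv (hev ▸ hd)
  have tight : ∀ X Y, P X → P Y → v ∈ X → v ∈ Y → dd t s F' X ≤ k → dd t s F' Y ≤ k →
      P (X ∩ Y) ∧ v ∈ X ∩ Y ∧ dd t s F' (X ∩ Y) ≤ k := by
    intro X Y hX hY hvX hvY h1 h2
    obtain ⟨h3, h4⟩ := hcl v hvN hv X Y hvX hvY hX hY
    have := dd_submod t s F' X Y
    have := hreq _ h4
    exact ⟨h3, ⟨hvX, hvY⟩, by omega⟩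
  by_contra hcon
  push Not at hcon
  obtain ⟨a, ha, b, hb, c, hc, hab, hac, hbc⟩ := Finset.two_lt_card.1 hcon
  rw [Finset.mem_filter] at ha hb hc
  obtain ⟨X, hX, hvX, hsX, hdX⟩ := crit a ha.1 ha.2
  obtain ⟨Y, hY, hvY, hsY, hdY⟩ := crit b hb.1 hb.2
  obtain ⟨Z, hZ, hvZ, hsZ, hdZ⟩ := crit c hc.1 hc.2
  obtain ⟨h1, h2, h3⟩ := tight X Y hX hY hvX hvY hdX hdY
  obtain ⟨h4, h5, h6⟩ := tight _ Z h1 hZ h2 hvZ h3 hdZ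
  have : 2 < dd t s F' (X ∩ Y ∩ Z) := by
    unfold dd
    refine Finset.two_lt_card.2 ⟨a, ?_, b, ?_, c, ?_, hab, hac, hbc⟩
    · simp only [Finset.mem_filter, ha.2]
      exact ⟨ha.1, h5, fun h => hsX h.1.1⟩
    · simp only [Finset.mem_filter, hb.2]
      exact ⟨hb.1, h5, fun h => hsY h.1.2⟩
    · simp only [Finset.mem_filter, hc.2]
      exact ⟨hc.1, h5, fun h => hsZ h.2⟩
  omega

def NT {V : Type} (N : Finset V) (S : Set V) : Prop := (∃ x ∈ N, x ∈ S) ∧ ∃ y ∈ N, y ∉ S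

def Sep {V : Type} (N : Finset V) (R : V → V → Prop) (S : Set V) : Prop :=
  ∃ x ∈ N, ∃ y ∈ N, x ∈ S ∧ y ∉ S ∧ R x y

theorem Sep.nt {V : Type} {N : Finset V} {R : V → V → Prop} {S : Set V} (h : Sep N R S) :
    NT N S := by
  obtain ⟨x, hx, y, hy, h1, h2, _⟩ := h
  exact ⟨⟨x, hx, h1⟩, y, hy, h2⟩

theorem NT.compl {V : Type} {N : Finset V} {S : Set V} (h : NT N S) :
    NT N Sᶜ := by
  obtain ⟨⟨x, hx, h1⟩, y, hy, h2⟩ := h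
  exact ⟨⟨y, hy, h2⟩, x, hx, by simpa using h1⟩

theorem Sep.compl {V : Type} {N : Finset V} {R : V → V → Prop} (hR : ∀ x y, R x y → R y x)
    {S : Set V} (h : Sep N R S) : Sep N R Sᶜ := by
  obtain ⟨x, hx, y, hy, h1, h2, h3⟩ := h
  exact ⟨y, hy, x, hx, h2, by simpa using h1, hR _ _ h3⟩

/-- half of the base case -/
theorem half_base {V ε : Type} (s t : ε → V) (N : Finset V) (F : Finset ε)
    (hs : ∀ e, s e ∈ N) (ht : ∀ e, t e ∈ N) (R : V → V → Prop) (hR : ∀ x y, R x y → R y x)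
    (h1 : ∀ S, NT N S → 1 ≤ dd s t F S)
    (h2 : ∀ S, Sep N R S → 2 ≤ dd s t F S)
    (hb : ∀ S, NT N S → dd s t F S ≤ 1 → (∃ v ∈ N, ∀ x ∈ N, x ∈ S ↔ x = v) ∨
      (∃ v ∈ N, ∀ x ∈ N, x ∉ S ↔ x = v))
    (r : V) (hr : r ∈ N) (y : V) (hy : y ∈ N) (hyr : y ≠ r) (hRr : R r y) :
    ∃ F' ⊆ F, F'.card ≤ 2 * N.card ∧ (∀ S, r ∈ S → NT N S → 1 ≤ dd s t F' S) ∧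
      (∀ S, r ∈ S → Sep N R S → 2 ≤ dd s t F' S) := by
  let D : Set V := {v | v ∈ N ∧ dd t s F {v} ≤ 1}
  let P : Set V → Prop := fun X => r ∉ X ∧ (∃ x ∈ N, x ∈ X) ∧ ¬ ∃ v ∈ D, ∀ x ∈ N, x ∈ X ↔ x = v
  have hnt : ∀ X : Set V, r ∉ X → (∃ x ∈ N, x ∈ X) → NT N Xᶜ := by
    rintro X h ⟨x, hx, hx'⟩
    exact ⟨⟨r, hr, h⟩, x, hx, by simpa using hx'⟩
  have single : ∀ (G : Finset ε) (X : Set V) (v : V), (∀ x ∈ N, x ∈ X ↔ x = v) →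
      dd t s G X = dd t s G {v} := by
    intro G X v h
    apply dd_congr
    · intro e; simpa using h _ (ht e)
    · intro e; simpa using h _ (hs e)
  -- edges into a vertex of D: loops are a nuisance
  let F0 := F.filter (fun e => s e ≠ t e)
  have hF0 : ∀ X, dd t s F0 X = dd t s F X := by
    intro X
    unfold dd
    rw [Finset.filter_filter]
    congr 1
    ext e
    simp only [Finset.mem_filter]
    constructor
    · tauto
    · rintro ⟨h, h', h''⟩
      exact ⟨h, fun hh => h'' (hh ▸ h'), h', h''⟩
  have HM := minimal_lemma s t N F0 ht 2 le_rfl D P ?_ ?_ ?_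
  · obtain ⟨F', hF', hcard, hreq, hkeep⟩ := HM
    have key : ∀ X, r ∉ X → (∃ x ∈ N, x ∈ X) → ¬ P X →
        ∃ v ∈ D, (∀ x ∈ N, x ∈ X ↔ x = v) ∧ dd t s F' X = dd t s F X := by
      intro X hX hX' hP
      have : ∃ v ∈ D, ∀ x ∈ N, x ∈ X ↔ x = v := by
        by_contra hcon
        exact hP ⟨hX, hX', hcon⟩
      obtain ⟨v, hv, hvX⟩ := this
      refine ⟨v, hv, hvX, ?_⟩
      rw [← hF0, single _ _ _ hvX, single _ _ _ hvX]
      apply le_antisymm (dd_mono _ _ hF' _)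
      unfold dd
      apply Finset.card_le_card
      intro e he
      simp only [Finset.mem_filter] at he ⊢
      refine ⟨hkeep e he.1 ?_, he.2⟩
      have : t e = v := by simpa using he.2.1
      rw [this]; exact hv
    refine ⟨F', hF'.trans (Finset.filter_subset _ _), hcard, ?_, ?_⟩
    · intro S hrS hS
      rw [← dd_compl]
      by_cases hP : P Sᶜ
      · exact le_trans (by norm_num) (hreq _ hP)
      · obtain ⟨v, hv, hvX, h⟩ := key Sᶜ (by simpa using hrS) hS.compl.1 hP
        rw [h, dd_compl]
        exact h1 S hS
    · intro S hrS hS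
      rw [← dd_compl]
      by_cases hP : P Sᶜ
      · exact hreq _ hP
      · obtain ⟨v, hv, hvX, h⟩ := key Sᶜ (by simpa using hrS) hS.nt.compl.1 hP
        rw [h, dd_compl]
        exact h2 S hS
  · intro v hv
    refine le_trans ?_ (le_trans hv.2 (by norm_num))
    rw [← hF0]
    unfold dd
    apply Finset.card_le_card
    intro e he
    simp only [Finset.mem_filter, F0, Set.mem_singleton_iff] at he ⊢
    exact ⟨he.1, he.2, fun h => he.1.2 (h.trans he.2.symm)⟩
  · rintro X ⟨hrX, hX, hnD⟩
    rw [hF0]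
    by_contra hcon
    have hn := hnt X hrX hX
    have hd : dd t s F X = dd s t F Xᶜ := (dd_compl _ _ _ _).symm
    rcases hb Xᶜ hn (by omega) with ⟨v, hv, hvX⟩ | ⟨v, hv, hvX⟩
    · have hvr : r = v := (hvX r hr).1 hrX
      subst hvr
      have := h2 Xᶜ ⟨r, hr, y, hy, hrX, fun h => hyr ((hvX y hy).1 h), hRr⟩
      omega
    · simp only [Set.mem_compl_iff, not_not] at hvX
      exact hnD ⟨v, ⟨hv, by rw [← single F X v hvX]; omega⟩, hvX⟩
  · rintro v hvN hv X Y hvX hvY ⟨hX1, hX2, hX3⟩ ⟨hY1, hY2, hY3⟩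
    refine ⟨⟨fun h => hX1 h.1, ⟨v, hvN, hvX, hvY⟩, ?_⟩, ⟨fun h => h.elim hX1 hY1, ⟨v, hvN, Or.inl hvX⟩, ?_⟩⟩
    · rintro ⟨w, hw, hw'⟩
      exact hv ((hw' v hvN).1 ⟨hvX, hvY⟩ ▸ hw)
    · rintro ⟨w, hw, hw'⟩
      exact hv ((hw' v hvN).1 (Or.inl hvX) ▸ hw)

/-- strong connectivity only, half -/
theorem half_strong {V ε : Type} (s t : ε → V) (N : Finset V) (F : Finset ε)
    (ht : ∀ e, t e ∈ N)
    (h1 : ∀ S, NT N S → 1 ≤ dd s t F S) (r : V) (hr : r ∈ N) :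
    ∃ F' ⊆ F, F'.card ≤ 2 * N.card ∧ (∀ S, r ∈ S → NT N S → 1 ≤ dd s t F' S) := by
  have HM := minimal_lemma s t N F ht 1 (by norm_num) ∅
    (fun X => r ∉ X ∧ ∃ x ∈ N, x ∈ X) (by simp) ?_ ?_
  · obtain ⟨F', hF', hcard, hreq, -⟩ := HM
    refine ⟨F', hF', hcard, fun S hS hn => ?_⟩
    rw [← dd_compl]
    exact hreq _ ⟨by simpa using hS, hn.compl.1⟩
  · rintro X ⟨h, x, hx, hxX⟩
    rw [← dd_compl]
    exact h1 _ ⟨⟨r, hr, h⟩, x, hx, by simpa using hxX⟩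
  · rintro v hv - X Y hX hY ⟨h, -⟩ ⟨h', -⟩
    exact ⟨⟨fun hh => h hh.1, v, hv, hX, hY⟩, fun hh => hh.elim h h', v, hv, Or.inl hX⟩

theorem base_case {V ε : Type} (s t : ε → V) (N : Finset V) (F : Finset ε)
    (hs : ∀ e, s e ∈ N) (ht : ∀ e, t e ∈ N) (R : V → V → Prop) (hR : ∀ x y, R x y → R y x)
    (h1 : ∀ S, NT N S → 1 ≤ dd s t F S)
    (h2 : ∀ S, Sep N R S → 2 ≤ dd s t F S)
    (hb : ∀ S, NT N S → dd s t F S ≤ 1 → (∃ v ∈ N, ∀ x ∈ N, x ∈ S ↔ x = v) ∨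
      (∃ v ∈ N, ∀ x ∈ N, x ∉ S ↔ x = v)) (hN : N.Nonempty) :
    ∃ F' ⊆ F, F'.card ≤ 4 * N.card ∧ (∀ S, NT N S → 1 ≤ dd s t F' S) ∧
      (∀ S, Sep N R S → 2 ≤ dd s t F' S) := by
  have h1' : ∀ S, NT N S → 1 ≤ dd t s F S := fun S hS => by
    rw [← dd_compl]; exact h1 _ hS.compl
  have h2' : ∀ S, Sep N R S → 2 ≤ dd t s F S := fun S hS => by
    rw [← dd_compl]; exact h2 _ (hS.compl hR)
  have hb' : ∀ S, NT N S → dd t s F S ≤ 1 → (∃ v ∈ N, ∀ x ∈ N, x ∈ S ↔ x = v) ∨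
      (∃ v ∈ N, ∀ x ∈ N, x ∉ S ↔ x = v) := fun S hS h => by
    rw [← dd_compl] at h
    have := hb _ hS.compl h
    simp only [Set.mem_compl_iff, not_not] at this
    exact this.symm
  by_cases hex : ∃ r ∈ N, ∃ y ∈ N, y ≠ r ∧ R r y
  · obtain ⟨r, hr, y, hy, hyr, hRr⟩ := hex
    obtain ⟨A, hA, hAc, hA1, hA2⟩ := half_base s t N F hs ht R hR h1 h2 hb r hr y hy hyr hRr
    obtain ⟨B, hB, hBc, hB1, hB2⟩ := half_base t s N F ht hs R hR h1' h2' hb' r hr y hy hyr hRr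
    refine ⟨A ∪ B, Finset.union_subset hA hB, ?_, fun S hS => ?_, fun S hS => ?_⟩
    · have := Finset.card_union_le A B
      omega
    · by_cases hrS : r ∈ S
      · exact (hA1 S hrS hS).trans (dd_mono _ _ Finset.subset_union_left _)
      · refine le_trans ?_ (dd_mono _ _ Finset.subset_union_right _)
        rw [← dd_compl]
        exact hB1 _ hrS hS.compl
    · by_cases hrS : r ∈ S
      · exact (hA2 S hrS hS).trans (dd_mono _ _ Finset.subset_union_left _)
      · refine le_trans ?_ (dd_mono _ _ Finset.subset_union_right _)
        rw [← dd_compl]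
        exact hB2 _ hrS (hS.compl hR)
  · obtain ⟨r, hr⟩ := hN
    obtain ⟨A, hA, hAc, hA1⟩ := half_strong s t N F ht h1 r hr
    obtain ⟨B, hB, hBc, hB1⟩ := half_strong t s N F hs h1' r hr
    refine ⟨A ∪ B, Finset.union_subset hA hB, ?_, fun S hS => ?_, fun S hS => ?_⟩
    · have := Finset.card_union_le A B
      omega
    · by_cases hrS : r ∈ S
      · exact (hA1 S hrS hS).trans (dd_mono _ _ Finset.subset_union_left _)
      · refine le_trans ?_ (dd_mono _ _ Finset.subset_union_right _)
        rw [← dd_compl]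
        exact hB1 _ hrS hS.compl
    · exfalso
      obtain ⟨x, hx, y, hy, hxS, hyS, hxy⟩ := hS
      exact hex ⟨x, hx, y, hy, fun h => hyS (h ▸ hxS), hxy⟩

theorem main_ind {V ε : Type} (n : ℕ) : ∀ (s t : ε → V) (N : Finset V) (F : Finset ε)
    (_ : ∀ e, s e ∈ N) (_ : ∀ e, t e ∈ N) (R : V → V → Prop) (_ : ∀ x y, R x y → R y x)
    (_ : ∀ S, NT N S → 1 ≤ dd s t F S)
    (_ : ∀ S, Sep N R S → 2 ≤ dd s t F S) (_ : N.card = n) (_ : 3 ≤ n),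
    ∃ F' ⊆ F, F'.card + 24 ≤ 12 * n ∧ (∀ S, NT N S → 1 ≤ dd s t F' S) ∧
      (∀ S, Sep N R S → 2 ≤ dd s t F' S) := by
  induction n using Nat.strong_induction_on with
  | _ n ih =>
  intro s t N F hs ht R hR h1 h2 hn h3
  by_cases hb : ∀ S, NT N S → dd s t F S ≤ 1 → (∃ v ∈ N, ∀ x ∈ N, x ∈ S ↔ x = v) ∨
      (∃ v ∈ N, ∀ x ∈ N, x ∉ S ↔ x = v)
  · obtain ⟨F', hF', hc, ha, hb⟩ := base_case s t N F hs ht R hR h1 h2 hb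
      (Finset.card_pos.1 (by omega))
    exact ⟨F', hF', by omega, ha, hb⟩
  push Not at hb
  obtain ⟨A, ⟨⟨a1, ha1, ha1A⟩, a0, ha0, ha0A⟩, hdA, hA1, hA2⟩ := hb
  have cA : 2 ≤ (N.filter (· ∈ A)).card := by
    by_contra hcon
    have : (N.filter (· ∈ A)).card ≤ 1 := by omega
    rw [Finset.card_le_one] at this
    obtain ⟨x, hx, hx'⟩ := hA1 a1 ha1
    have := this x
    simp only [Finset.mem_filter] at this
    rcases hx' with ⟨h, h'⟩ | ⟨h, h'⟩
    · exact h' (this ⟨hx, h⟩ a1 ⟨ha1, ha1A⟩)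
    · exact h (h' ▸ ha1A)
  have cB : 2 ≤ (N.filter (· ∉ A)).card := by
    by_contra hcon
    have : (N.filter (· ∉ A)).card ≤ 1 := by omega
    rw [Finset.card_le_one] at this
    obtain ⟨x, hx, hx'⟩ := hA2 a0 ha0
    have := this x
    simp only [Finset.mem_filter] at this
    rcases hx' with ⟨h, h'⟩ | ⟨h, h'⟩
    · exact h' (this ⟨hx, h⟩ a0 ⟨ha0, ha0A⟩)
    · exact ha0A (h' ▸ h)
  have cAB : (N.filter (· ∈ A)).card + (N.filter (· ∉ A)).card = n := by
    rw [← hn]; exact Finset.card_filter_add_card_filter_not _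
  let p1 : V → V := fun v => if v ∈ A then v else a0
  let p2 : V → V := fun v => if v ∈ A then a1 else v
  let N1 := insert a0 (N.filter (· ∈ A))
  let N2 := insert a1 (N.filter (· ∉ A))
  have cN1 : N1.card = (N.filter (· ∈ A)).card + 1 :=
    Finset.card_insert_of_notMem (by simp [ha0A])
  have cN2 : N2.card = (N.filter (· ∉ A)).card + 1 :=
    Finset.card_insert_of_notMem (by simp [ha1A])
  have hp1 : ∀ v ∈ N, p1 v ∈ N1 := by
    intro v hv
    by_cases h : v ∈ A <;> simp [p1, N1, h, hv]
  have hp2 : ∀ v ∈ N, p2 v ∈ N2 := by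
    intro v hv
    by_cases h : v ∈ A <;> simp [p2, N2, h, hv]
  have hN1 : ∀ v ∈ N1, v ∈ N ∧ p1 v = v := by
    intro v hv
    simp only [N1, Finset.mem_insert, Finset.mem_filter] at hv
    rcases hv with rfl | hv
    · simp [p1, ha0]
    · simp [p1, hv.1, hv.2]
  have hN2 : ∀ v ∈ N2, v ∈ N ∧ p2 v = v := by
    intro v hv
    simp only [N2, Finset.mem_insert, Finset.mem_filter] at hv
    rcases hv with rfl | hv
    · simp [p2, ha1]
    · simp [p2, hv.1, hv.2]
  -- generic transfer of cut conditions to the contracted graph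
  have nt_tr : ∀ (p : V → V) (M : Finset V), (∀ v ∈ M, v ∈ N ∧ p v = v) → ∀ S, NT M S →
      NT N (p ⁻¹' S) := by
    rintro p M h S ⟨⟨x, hx, hxS⟩, y, hy, hyS⟩
    exact ⟨⟨x, (h x hx).1, by simpa [(h x hx).2] using hxS⟩,
      y, (h y hy).1, by simpa [(h y hy).2] using hyS⟩
  have sep_tr : ∀ (p : V → V) (M : Finset V), (∀ v ∈ M, v ∈ N ∧ p v = v) → ∀ Q : V → V → Prop,
      (∀ x y, Q x y → R x y) → ∀ S, Sep M Q S → Sep N R (p ⁻¹' S) := by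
    rintro p M h Q hQ S ⟨x, hx, y, hy, hxS, hyS, hxy⟩
    exact ⟨x, (h x hx).1, y, (h y hy).1, by simpa [(h x hx).2] using hxS,
      by simpa [(h y hy).2] using hyS, hQ _ _ hxy⟩
  obtain ⟨C1, hC1, cC1, h11, h12⟩ := ih N1.card (by omega) (p1 ∘ s) (p1 ∘ t) N1 F
    (fun e => hp1 _ (hs e)) (fun e => hp1 _ (ht e)) (fun x y => R x y ∧ x ∈ A ∧ y ∈ A)
    (fun x y h => ⟨hR _ _ h.1, h.2.2, h.2.1⟩)
    (fun S hS => h1 _ (nt_tr p1 N1 hN1 S hS))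
    (fun S hS => h2 _ (sep_tr p1 N1 hN1 _ (fun x y h => h.1) S hS)) rfl (by omega)
  obtain ⟨C2, hC2, cC2, h21, h22⟩ := ih N2.card (by omega) (p2 ∘ s) (p2 ∘ t) N2 F
    (fun e => hp2 _ (hs e)) (fun e => hp2 _ (ht e)) (fun x y => R x y ∧ x ∉ A ∧ y ∉ A)
    (fun x y h => ⟨hR _ _ h.1, h.2.2, h.2.1⟩)
    (fun S hS => h1 _ (nt_tr p2 N2 hN2 S hS))
    (fun S hS => h2 _ (sep_tr p2 N2 hN2 _ (fun x y h => h.1) S hS)) rfl (by omega)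
  -- transfer back
  have d1 : ∀ T : Set V, (∀ v ∈ N, v ∉ A → (v ∈ T ↔ a0 ∈ T)) →
      dd (p1 ∘ s) (p1 ∘ t) C1 T ≤ dd s t (C1 ∪ C2) T := by
    intro T hT
    refine le_trans (le_of_eq ?_) (dd_mono s t Finset.subset_union_left T)
    have : ∀ v ∈ N, p1 v ∈ T ↔ v ∈ T := by
      intro v hv
      by_cases h : v ∈ A
      · simp [p1, h]
      · simp [p1, h, hT v hv h]
    unfold dd
    simp only [Function.comp, this _ (hs _), this _ (ht _)]
  have d2 : ∀ T : Set V, (∀ v ∈ N, v ∈ A → (v ∈ T ↔ a1 ∈ T)) →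
      dd (p2 ∘ s) (p2 ∘ t) C2 T ≤ dd s t (C1 ∪ C2) T := by
    intro T hT
    refine le_trans (le_of_eq ?_) (dd_mono s t Finset.subset_union_right T)
    have : ∀ v ∈ N, p2 v ∈ T ↔ v ∈ T := by
      intro v hv
      by_cases h : v ∈ A
      · simp [p2, h, hT v hv h]
      · simp [p2, h]
    unfold dd
    simp only [Function.comp, this _ (hs _), this _ (ht _)]
  have hCA : dd s t (C1 ∪ C2) A ≤ 1 := (dd_mono s t (Finset.union_subset hC1 hC2) A).trans hdA
  have mA : ∀ v ∈ N, v ∈ A → v ∈ N1 := fun v hv h => by simp [N1, hv, h]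
  have mB : ∀ v ∈ N, v ∉ A → v ∈ N2 := fun v hv h => by simp [N2, hv, h]
  have m0 : a0 ∈ N1 := by simp [N1]
  have m1 : a1 ∈ N2 := by simp [N2]
  -- the sets T ∩ A and T ∪ A
  have i1 : ∀ T : Set V, (∃ x ∈ N, x ∈ T ∧ x ∈ A) → 1 ≤ dd s t (C1 ∪ C2) (T ∩ A) := by
    rintro T ⟨x, hx, hxT, hxA⟩
    refine le_trans (h11 (T ∩ A) ⟨⟨x, mA x hx hxA, hxT, hxA⟩, a0, m0, fun h => ha0A h.2⟩) (d1 _ ?_)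
    intro v _ hv
    exact ⟨fun h => absurd h.2 hv, fun h => absurd h.2 ha0A⟩
  have u1 : ∀ T : Set V, (∃ x ∈ N, x ∉ T ∧ x ∉ A) → 1 ≤ dd s t (C1 ∪ C2) (T ∪ A) := by
    rintro T ⟨x, hx, hxT, hxA⟩
    refine le_trans (h21 (T ∪ A) ⟨⟨a1, m1, Or.inr ha1A⟩, x, mB x hx hxA, fun h => h.elim hxT hxA⟩) (d2 _ ?_)
    intro v _ hv
    exact ⟨fun h => Or.inr ha1A, fun h => Or.inr hv⟩
  refine ⟨C1 ∪ C2, Finset.union_subset hC1 hC2, ?_, ?_, ?_⟩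
  · have := Finset.card_union_le C1 C2
    omega
  · intro T hT
    have sub := dd_submod s t (C1 ∪ C2) T A
    by_cases hi : ∃ x ∈ N, x ∈ T ∧ x ∈ A
    · by_cases hu : ∃ x ∈ N, x ∉ T ∧ x ∉ A
      · have := i1 T hi
        have := u1 T hu
        omega
      · push Not at hu
        have hu' : ∀ v ∈ N, v ∉ A → v ∈ T := fun v hv h => by
          by_contra h'
          exact h (hu v hv h')
        obtain ⟨y, hy, hyT⟩ := hT.2
        obtain ⟨x, hx, hxT, hxA⟩ := hi
        refine le_trans (h11 T ⟨⟨x, mA x hx hxA, hxT⟩, y, mA y hy (hu y hy hyT), hyT⟩) (d1 _ ?_)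
        intro v hv hvA
        exact ⟨fun _ => hu' a0 ha0 ha0A, fun _ => hu' v hv hvA⟩
    · push Not at hi
      obtain ⟨⟨x, hx, hxT⟩, y, hy, hyT⟩ := hT
      have ha1T : a1 ∉ T := fun h => hi a1 ha1 h ha1A
      refine le_trans (h21 T ⟨⟨x, mB x hx (hi x hx hxT), hxT⟩, a1, m1, ha1T⟩) (d2 _ ?_)
      intro v hv hvA
      exact ⟨fun h => absurd hvA (hi v hv h), fun h => absurd h ha1T⟩
  · rintro T ⟨x, hx, y, hy, hxT, hyT, hxy⟩
    have sub := dd_submod s t (C1 ∪ C2) T A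
    have hsame : x ∈ A ↔ y ∈ A := by
      constructor
      · intro h
        by_contra h'
        have := h2 A ⟨x, hx, y, hy, h, h', hxy⟩
        omega
      · intro h
        by_contra h'
        have := h2 A ⟨y, hy, x, hx, h, h', hR _ _ hxy⟩
        omega
    by_cases hxA : x ∈ A
    · have hyA := hsame.1 hxA
      by_cases hu : ∃ x ∈ N, x ∉ T ∧ x ∉ A
      · have := u1 T hu
        have : 2 ≤ dd s t (C1 ∪ C2) (T ∩ A) := by
          refine le_trans (h12 (T ∩ A) ⟨x, mA x hx hxA, y, mA y hy hyA, ⟨hxT, hxA⟩,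
            fun h => hyT h.1, hxy, hxA, hyA⟩) (d1 _ ?_)
          intro v _ hv
          exact ⟨fun h => absurd h.2 hv, fun h => absurd h.2 ha0A⟩
        omega
      · push Not at hu
        have hu' : ∀ v ∈ N, v ∉ A → v ∈ T := fun v hv h => by
          by_contra h'
          exact h (hu v hv h')
        refine le_trans (h12 T ⟨x, mA x hx hxA, y, mA y hy hyA, hxT, hyT, hxy, hxA, hyA⟩) (d1 _ ?_)
        intro v hv hvA
        exact ⟨fun _ => hu' a0 ha0 ha0A, fun _ => hu' v hv hvA⟩
    · have hyA : y ∉ A := fun h => hxA (hsame.2 h)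
      by_cases hi : ∃ x ∈ N, x ∈ T ∧ x ∈ A
      · have := i1 T hi
        have : 2 ≤ dd s t (C1 ∪ C2) (T ∪ A) := by
          refine le_trans (h22 (T ∪ A) ⟨x, mB x hx hxA, y, mB y hy hyA, Or.inl hxT,
            fun h => h.elim hyT hyA, hxy, hxA, hyA⟩) (d2 _ ?_)
          intro v _ hv
          exact ⟨fun h => Or.inr ha1A, fun h => Or.inr hv⟩
        omega
      · push Not at hi
        have ha1T : a1 ∉ T := fun h => hi a1 ha1 h ha1A
        refine le_trans (h22 T ⟨x, mB x hx hxA, y, mB y hy hyA, hxT, hyT, hxy, hxA, hyA⟩) (d2 _ ?_)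
        intro v hv hvA
        exact ⟨fun h => absurd hvA (hi v hv h), fun h => absurd h ha1T⟩

theorem reaches_iff_rtg {V : Type} (E : Set (V × V)) (u w : V) :
    Reaches E u w ↔ Relation.ReflTransGen (fun a b => (a, b) ∈ E) u w := by
  constructor
  · rintro ⟨p, h1, h2, h3⟩
    induction p generalizing u with
    | nil => simp at h1
    | cons a l ih =>
      simp only [List.head?_cons, Option.some.injEq] at h1
      subst h1
      cases l with
      | nil =>
        simp only [List.getLast?_singleton, Option.some.injEq] at h2
        subst h2
        exact .refl
      | cons b l =>
        have h3' := List.isChain_cons_cons.1 h3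
        exact .head h3'.1 (ih b rfl (by simpa [List.getLast?_cons_cons] using h2) h3'.2)
  · intro h
    induction h using Relation.ReflTransGen.head_induction_on with
    | refl => exact ⟨[w], rfl, rfl, List.isChain_singleton _⟩
    | head hab _ ih =>
      rename_i a0 c0
      obtain ⟨p, h1, h2, h3⟩ := ih
      cases p with
      | nil => simp at h1
      | cons b l =>
        simp only [List.head?_cons, Option.some.injEq] at h1
        subst h1
        exact ⟨_ :: b :: l, rfl, by simpa [List.getLast?_cons_cons] using h2,
          List.isChain_cons_cons.2 ⟨hab, h3⟩⟩

theorem reaches_iff_cut {V : Type} (E : Set (V × V)) (u w : V) :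
    Reaches E u w ↔ ∀ S : Set V, u ∈ S → w ∉ S → ∃ e ∈ E, e.1 ∈ S ∧ e.2 ∉ S := by
  rw [reaches_iff_rtg]
  constructor
  · intro h S hu hw
    by_contra hcon
    push Not at hcon
    apply hw
    induction h with
    | refl => exact hu
    | tail _ hbc ih =>
      by_contra h'
      have hb := ih (fun hb => h' (hcon _ hbc hb))
      exact h' (hcon _ hbc hb)
  · intro h
    by_contra hcon
    obtain ⟨e, he, h1, h2⟩ := h {x | Relation.ReflTransGen (fun a b => (a, b) ∈ E) u x} .refl hcon
    exact h2 (Relation.ReflTransGen.tail h1 he)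

theorem sc_iff {V : Type} [Fintype V] (F : Finset (V × V)) :
    StronglyConnected (F : Set (V × V)) ↔
      ∀ S, NT Finset.univ S → 1 ≤ dd Prod.fst Prod.snd F S := by
  simp only [StronglyConnected, reaches_iff_cut]
  constructor
  · rintro h S ⟨⟨x, _, hx⟩, y, _, hy⟩
    obtain ⟨e, he, h1⟩ := h x y S hx hy
    exact Finset.card_pos.2 ⟨e, Finset.mem_filter.2 ⟨he, h1⟩⟩
  · intro h u w S hu hw
    obtain ⟨e, he⟩ := Finset.card_pos.1 (h S ⟨⟨u, Finset.mem_univ _, hu⟩, w, Finset.mem_univ _, hw⟩)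
    rw [Finset.mem_filter] at he
    exact ⟨e, he.1, he.2⟩

theorem cut_two {V : Type} (F : Finset (V × V)) (S : Set V) (h : 2 ≤ dd Prod.fst Prod.snd F S)
    (e : V × V) : ∃ e' ∈ (F : Set (V × V)) \ {e}, e'.1 ∈ S ∧ e'.2 ∉ S := by
  obtain ⟨e', he', hne⟩ := Finset.exists_mem_ne (lt_of_lt_of_le one_lt_two h) e
  rw [Finset.mem_filter] at he'
  exact ⟨e', ⟨he'.1, hne⟩, he'.2⟩

theorem two_cut {V : Type} (F : Finset (V × V)) (S : Set V) (h1 : 1 ≤ dd Prod.fst Prod.snd F S)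
    (h : ∀ e ∈ (F : Set (V × V)), ∃ e' ∈ (F : Set (V × V)) \ {e}, e'.1 ∈ S ∧ e'.2 ∉ S) :
    2 ≤ dd Prod.fst Prod.snd F S := by
  obtain ⟨e, he⟩ := Finset.card_pos.1 h1
  obtain ⟨e', he', hS⟩ := h e (Finset.mem_filter.1 he).1
  exact Finset.one_lt_card.2 ⟨e', Finset.mem_filter.2 ⟨he'.1, hS⟩, e, he, he'.2⟩

theorem tec_symm {V : Type} {E : Set (V × V)} (x y : V) (h : TwoEdgeConn E x y) :
    TwoEdgeConn E y x := by
  rcases h with h | h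
  · exact Or.inl h.symm
  · exact Or.inr fun e he => (h e he).symm

theorem reaches_mono {V : Type} {E E' : Set (V × V)} (h : E ⊆ E') {u w : V}
    (hr : Reaches E u w) : Reaches E' u w := by
  obtain ⟨p, h1, h2, h3⟩ := hr
  exact ⟨p, h1, h2, List.IsChain.imp (fun _ _ hab => h hab) h3⟩

end SparseCert

/-- Sparse certificate: there is a constant `c` such that every strongly connected
digraph on `n` vertices has a strongly connected spanning subgraph with at most
`c * n` edges and the same 2-edge-connected blocks. -/
theorem sparse_certificate_exists :
    ∃ c : ℕ, ∀ (V : Type) [Fintype V] (E : Set (V × V)),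
      StronglyConnected E →
      ∃ E' : Set (V × V), E' ⊆ E ∧ E'.ncard ≤ c * Nat.card V ∧
        StronglyConnected E' ∧
        ∀ v w : V, TwoEdgeConn E' v w ↔ TwoEdgeConn E v w := by
  classical
  refine ⟨12, fun V _ E hE => ?_⟩
  by_cases hn : Fintype.card V ≤ 2
  · refine ⟨E, subset_rfl, ?_, hE, fun _ _ => Iff.rfl⟩
    have h1 : E.ncard ≤ (Set.univ : Set (V × V)).ncard := Set.ncard_le_ncard (Set.subset_univ _)
    rw [Set.ncard_univ, Nat.card_eq_fintype_card, Fintype.card_prod] at h1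
    rw [Nat.card_eq_fintype_card]
    nlinarith
  · obtain ⟨F, rfl⟩ : ∃ F : Finset (V × V), (F : Set (V × V)) = E :=
      ⟨E.toFinite.toFinset, by simp⟩
    have hsc := (SparseCert.sc_iff F).1 hE
    have HM := SparseCert.main_ind (Fintype.card V) Prod.fst Prod.snd
      Finset.univ F (fun _ => Finset.mem_univ _) (fun _ => Finset.mem_univ _)
      (TwoEdgeConn (F : Set (V × V))) SparseCert.tec_symm hsc ?_ rfl (by omega)
    · obtain ⟨F', hF', hc, h1, h2⟩ := HM
      have hsc' := (SparseCert.sc_iff F').2 h1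
      refine ⟨F', by exact_mod_cast hF', ?_, hsc', fun v w => ⟨?_, ?_⟩⟩
      · rw [Set.ncard_coe_finset, Nat.card_eq_fintype_card]
        omega
      · rintro (h | h)
        · exact Or.inl h
        · right
          intro e he
          by_cases he' : e ∈ (F' : Set (V × V))
          · have hsub : (F' : Set (V × V)) \ {e} ⊆ (F : Set (V × V)) \ {e} :=
              Set.diff_subset_diff_left (by exact_mod_cast hF')
            exact ⟨SparseCert.reaches_mono hsub (h e he').1, SparseCert.reaches_mono hsub (h e he').2⟩
          · have hsub : (F' : Set (V × V)) ⊆ (F : Set (V × V)) \ {e} := fun x hx =>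
              ⟨hF' hx, fun hxe => he' (by rw [← Set.mem_singleton_iff.1 hxe]; exact hx)⟩
            exact ⟨SparseCert.reaches_mono hsub (hsc' v w), SparseCert.reaches_mono hsub (hsc' w v)⟩
      · intro h
        right
        intro e _
        simp only [SparseCert.reaches_iff_cut]
        refine ⟨fun S hv hw => SparseCert.cut_two F' S (h2 S ?_) e,
          fun S hw hv => SparseCert.cut_two F' S (h2 S ?_) e⟩
        · exact ⟨v, Finset.mem_univ _, w, Finset.mem_univ _, hv, hw, h⟩
        · exact ⟨w, Finset.mem_univ _, v, Finset.mem_univ _, hw, hv, SparseCert.tec_symm _ _ h⟩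
    · intro S hS
      have h1 := hsc S hS.nt
      obtain ⟨x, _, y, _, hx, hy, hxy⟩ := hS
      rcases hxy with rfl | hxy
      · exact absurd hx hy
      · exact SparseCert.two_cut F S h1 fun e he =>
          (SparseCert.reaches_iff_cut _ _ _).1 (hxy e he).1 S hx hy
end

section
/- The necessary condition of the subtree decomposition is not sufficient: there exist a strongly connected digraph G = (V, E), a start vertex s ∈ V, and two distinct vertices v, w ∈ V such that the set of marked vertices of G(s) dominating v in G(s) equals the set of marked vertices of G(s) dominating w in G(s), and the set of marked vertices of G^R(s) dominating v in G^R(s) equals the set of marked vertices of G^R(s) dominating w in G^R(s), yet v and w are not 2-edge-connected in G. -/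
variable {V : Type*}

def exE : Finset (Fin 6 × Fin 6) :=
  {(0,2),(0,1),(1,2),(0,3),(1,3),(2,5),(2,4),(3,5),(3,4),(4,5),(5,0)}

def exToS (u : Fin 6) : List (Fin 6) :=
  ![[0],[1,2,5,0],[2,5,0],[3,5,0],[4,5,0],[5,0]] u

def exFromS (u : Fin 6) : List (Fin 6) :=
  ![[],[1],[2],[3],[2,4],[2,5]] u

instance exDec (E : Set (Fin 6 × Fin 6)) [DecidablePred (· ∈ E)] (u w : Fin 6)
    (p : List (Fin 6)) : Decidable (IsPathFrom E u w p) := by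
  haveI : DecidableRel (fun a b : Fin 6 => (a, b) ∈ E) :=
    fun a b => inferInstanceAs (Decidable ((· ∈ E) (a, b)))
  exact inferInstanceAs (Decidable (p.head? = some u ∧ p.getLast? = some w ∧
    List.IsChain (fun a b => (a, b) ∈ E) p))

def exSet : Set (Fin 6 × Fin 6) := {e | e ∈ exE}

instance exSetDec : DecidablePred (· ∈ exSet) := fun e => inferInstanceAs (Decidable (e ∈ exE))

instance exRevDec : DecidablePred (· ∈ reverseE exSet) :=
  fun e => inferInstanceAs (Decidable ((e.2, e.1) ∈ exE))

theorem ex_strong : StronglyConnected exSet := by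
  intro u w
  refine ⟨exToS u ++ exFromS w, ?_⟩
  revert u w
  decide

theorem ex_fwd (t : Fin 6) (ht : t = 2 ∨ t = 3) (x : Fin 6) :
    ¬ (Marked exSet 0 x ∧ Dominates exSet 0 x t) := by
  rintro ⟨⟨u, -, hm⟩, hd⟩
  have h1 := hd [0, t] (by rcases ht with rfl | rfl <;> decide)
  have h2 := hd [0, 1, t] (by rcases ht with rfl | rfl <;> decide)
  have hx : x = 0 ∨ x = t := by simpa using h1
  rcases hx with rfl | rfl
  · have := hm [0] (by decide)
    simp at this
  · have h3 := hm [0, x] (by rcases ht with rfl | rfl <;> decide)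
    have h4 := hm [0, 1, x] (by rcases ht with rfl | rfl <;> decide)
    clear hm hd h1
    try clear h2
    rcases ht with rfl | rfl <;> revert h3 h4 <;> revert u <;> decide

theorem ex_rev_dom (t : Fin 6) (ht : t = 2 ∨ t = 3) : Dominates (reverseE exSet) 0 5 t := by
  rintro p ⟨h1, h2, h3⟩
  match p, h1, h2, h3 with
  | [], h1, _, _ => simp at h1
  | [a], h1, h2, _ =>
    simp at h1 h2
    subst h1
    subst h2
    simp at ht
  | a :: b :: l, h1, _, h3 =>
    simp at h1
    subst h1
    have h : ((0 : Fin 6), b) ∈ reverseE exSet := (List.isChain_cons_cons.1 h3).1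
    have : b = 5 := by clear h3; clear * - h; revert h; revert b; decide
    simp [this]

theorem ex_rev (t : Fin 6) (ht : t = 2 ∨ t = 3) (x : Fin 6)
    (h : Marked (reverseE exSet) 0 x ∧ Dominates (reverseE exSet) 0 x t) : x = 5 := by
  obtain ⟨⟨u, -, hm⟩, hd⟩ := h
  have h1 := hd [0, 5, t] (by rcases ht with rfl | rfl <;> decide)
  have hx : x = 0 ∨ x = 5 ∨ x = t := by simpa using h1
  rcases hx with rfl | rfl | rfl
  · have := hm [0] (by decide)
    simp at this
  · rfl
  · have h3 := hm [0, 5, x] (by rcases ht with rfl | rfl <;> decide)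
    have h4 := hm [0, 5, 4, x] (by rcases ht with rfl | rfl <;> decide)
    clear hm hd h1
    try clear h2
    rcases ht with rfl | rfl <;> revert h3 h4 <;> revert u <;> decide

theorem ex_closed (p : List (Fin 6)) : ∀ u : Fin 6, (u = 2 ∨ u = 4 ∨ u = 5) →
    ¬ IsPathFrom (exSet \ {(5, 0)}) u 3 p := by
  induction p with
  | nil => rintro u _ ⟨h, -⟩; simp at h
  | cons a l ih =>
    rintro u hu ⟨h1, h2, h3⟩
    simp at h1
    subst h1
    cases l with
    | nil =>
      simp at h2
      subst h2
      simp at hu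
    | cons b l =>
      have h3' := List.isChain_cons_cons.1 h3
      have hb : b = 2 ∨ b = 4 ∨ b = 5 := by
        have h4 : (a, b) ∈ exE := h3'.1.1
        have h5 : (a, b) ≠ (5, 0) := h3'.1.2
        clear h3' h3 h2 ih
        revert a b
        decide
      exact ih b hb ⟨rfl, by simpa using h2, h3'.2⟩

/-- The necessary condition of the subtree decomposition is not sufficient: there
are a strongly connected digraph, a start vertex `s`, and distinct vertices `v, w`
lying in the same subtree of the decomposition of the dominator tree of `G(s)` and
of `G^R(s)` (the marked dominators of `v` and `w` coincide in both flow graphs),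
yet `v` and `w` are not 2-edge-connected. -/
theorem same_subtrees_not_sufficient :
    ∃ (V : Type) (_ : Fintype V) (E : Set (V × V)) (s v w : V),
      StronglyConnected E ∧ v ≠ w ∧
      {x | Marked E s x ∧ Dominates E s x v} =
        {x | Marked E s x ∧ Dominates E s x w} ∧
      {x | Marked (reverseE E) s x ∧ Dominates (reverseE E) s x v} =
        {x | Marked (reverseE E) s x ∧ Dominates (reverseE E) s x w} ∧
      ¬ TwoEdgeConn E v w := by
  refine ⟨Fin 6, inferInstance, exSet, 0, 2, 3, ex_strong, by decide, ?_, ?_, ?_⟩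
  · ext x
    exact ⟨fun h => (ex_fwd 2 (Or.inl rfl) x h).elim, fun h => (ex_fwd 3 (Or.inr rfl) x h).elim⟩
  · ext x
    constructor
    · intro h
      have hx := ex_rev 2 (Or.inl rfl) x h
      subst hx
      exact ⟨h.1, ex_rev_dom 3 (Or.inr rfl)⟩
    · intro h
      have hx := ex_rev 3 (Or.inr rfl) x h
      subst hx
      exact ⟨h.1, ex_rev_dom 2 (Or.inl rfl)⟩
  · rintro (h | h)
    · exact absurd h (by decide)
    · obtain ⟨⟨p, hp⟩, -⟩ := h (5, 0) (by decide)
      exact ex_closed p 2 (Or.inl rfl) hp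
end
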